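/- Let X ⊆ ℝ^d be a Delone set with parameters r and R. If the 2R-clusters of X fall into finitely many equivalence classes (N(2R) < ∞), then for every ρ > 0 the ρ-clusters of X fall into finitely many equivalence classes (N(ρ) < ∞); that is, X is a set of finite type. -/

import Mathlib

open Metric

/-- A Delone set in `ℝ^d` with parameters `r, R > 0`: every open ball of radius `r`
contains at most one point of `X` and every closed ball of radius `R` contains at
least one point of `X`. -/
def IsDeloneSet {d : ℕ} (X : Set (EuclideanSpace ℝ (Fin d))) (r R : ℝ) : Prop :=
  0 < r ∧ 0 < R ∧
    (∀ c : EuclideanSpace ℝ (Fin d), (X ∩ Metric.ball c r).Subsingleton) ∧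
    (∀ c : EuclideanSpace ℝ (Fin d), (X ∩ Metric.closedBall c R).Nonempty)

/-- A `t`-chain in `X` joining `x` to `x'`: a finite sequence of points of `X`
starting at `x`, ending at `x'`, with consecutive distances at most `t`. -/
def TChain {d : ℕ} (X : Set (EuclideanSpace ℝ (Fin d))) (t : ℝ)
    (x x' : EuclideanSpace ℝ (Fin d)) : Prop :=
  ∃ (m : ℕ) (c : ℕ → EuclideanSpace ℝ (Fin d)),
    c 0 = x ∧ c m = x' ∧ (∀ i ≤ m, c i ∈ X) ∧
    ∀ i < m, dist (c i) (c (i + 1)) ≤ t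

/-- `X` is uniformly discrete: some open ball radius `r > 0` so that every open
ball of radius `r` contains at most one point of `X`. -/
def UniformlyDiscrete {d : ℕ} (X : Set (EuclideanSpace ℝ (Fin d))) : Prop :=
  ∃ r > 0, ∀ c : EuclideanSpace ℝ (Fin d), (X ∩ Metric.ball c r).Subsingleton

/-- `X` is a `t`-bonded set: uniformly discrete, full affine span, and any two
points of `X` are joined by a `t`-chain in `X`. -/
def TBonded {d : ℕ} (X : Set (EuclideanSpace ℝ (Fin d))) (t : ℝ) : Prop :=
  UniformlyDiscrete X ∧ affineSpan ℝ X = ⊤ ∧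
    ∀ x ∈ X, ∀ x' ∈ X, TChain X t x x'

/-- The `ρ`-cluster of `X` centered at `x`: points of `X` at distance at most `ρ` from `x`. -/
def cluster {d : ℕ} (X : Set (EuclideanSpace ℝ (Fin d)))
    (x : EuclideanSpace ℝ (Fin d)) (ρ : ℝ) : Set (EuclideanSpace ℝ (Fin d)) :=
  X ∩ Metric.closedBall x ρ

/-- The symmetry group `S_x(ρ)` of the cluster `C_x(ρ)`: isometries of `ℝ^d`
fixing `x` and mapping the cluster onto itself. -/
def symmGroup {d : ℕ} (X : Set (EuclideanSpace ℝ (Fin d)))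
    (x : EuclideanSpace ℝ (Fin d)) (ρ : ℝ) :
    Set (EuclideanSpace ℝ (Fin d) ≃ᵢ EuclideanSpace ℝ (Fin d)) :=
  {s | s x = x ∧ s '' cluster X x ρ = cluster X x ρ}

/-- `Sym(X)`: the isometries of `ℝ^d` mapping `X` onto `X`. -/
def SymX {d : ℕ} (X : Set (EuclideanSpace ℝ (Fin d))) :
    Set (EuclideanSpace ℝ (Fin d) ≃ᵢ EuclideanSpace ℝ (Fin d)) :=
  {g | g '' X = X}

/-- Equivalence of the clusters `C_x(ρ)` and `C_{x'}(ρ)`: some isometry of `ℝ^d`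
sends `x` to `x'` and `C_x(ρ)` onto `C_{x'}(ρ)`. -/
def ClusterEquiv {d : ℕ} (X : Set (EuclideanSpace ℝ (Fin d))) (ρ : ℝ)
    (x x' : EuclideanSpace ℝ (Fin d)) : Prop :=
  ∃ g : EuclideanSpace ℝ (Fin d) ≃ᵢ EuclideanSpace ℝ (Fin d),
    g x = x' ∧ g '' cluster X x ρ = cluster X x' ρ

/-- The rank of the cluster `C_x(ρ)`: the dimension of its affine span. -/
noncomputable def clusterRank {d : ℕ} (X : Set (EuclideanSpace ℝ (Fin d)))
    (x : EuclideanSpace ℝ (Fin d)) (ρ : ℝ) : ℕ :=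
  Module.finrank ℝ (affineSpan ℝ (cluster X x ρ)).direction

/-- Local bound on number of points. -/
lemma delone_card_bound {d : ℕ} {X : Set (EuclideanSpace ℝ (Fin d))} {r R : ℝ}
    (hX : IsDeloneSet X r R) (ρ : ℝ) :
    ∃ n : ℕ, ∀ y, (X ∩ closedBall y ρ).Finite ∧ (X ∩ closedBall y ρ).ncard ≤ n := by
  obtain ⟨hr, hR, h1, h2⟩ := hX
  obtain ⟨t, -, htf, ht⟩ := (isCompact_closedBall (0 : EuclideanSpace ℝ (Fin d)) ρ).finite_cover_balls hr
  refine ⟨t.ncard, fun y => ?_⟩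
  have hc : ∀ z ∈ X ∩ closedBall y ρ, ∃ c ∈ t, z - y ∈ ball c r := by
    intro z hz
    have : z - y ∈ closedBall (0 : EuclideanSpace ℝ (Fin d)) ρ := by
      have := hz.2
      rw [mem_closedBall, dist_eq_norm] at this
      simpa using this
    simpa using ht this
  choose! f hf hf2 using hc
  have hinj : Set.InjOn f (X ∩ closedBall y ρ) := by
    intro a ha b hb hab
    refine h1 (f a + y) ⟨ha.1, ?_⟩ ⟨hb.1, ?_⟩
    · have := hf2 a ha
      rw [mem_ball, dist_eq_norm] at this ⊢
      convert this using 2; abel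
    · have := hf2 b hb
      rw [← hab] at this
      rw [mem_ball, dist_eq_norm] at this ⊢
      convert this using 2; abel
  exact ⟨Set.Finite.of_injOn hf hinj htf, Set.ncard_le_ncard_of_injOn f hf hinj htf⟩

/-- Voronoi adjacency. -/
def VAdj {d : ℕ} (X : Set (EuclideanSpace ℝ (Fin d))) (x x' : EuclideanSpace ℝ (Fin d)) : Prop :=
  ∃ c, ∀ z ∈ X, dist c x ≤ dist c z ∧ dist c x' ≤ dist c z

lemma greedy_step {d : ℕ} {X : Set (EuclideanSpace ℝ (Fin d))} {r R : ℝ}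
    (hX : IsDeloneSet X r R) {x y : EuclideanSpace ℝ (Fin d)} (hx : x ∈ X) (hy : y ∈ X)
    (hxy : x ≠ y) : ∃ x' ∈ X, VAdj X x x' ∧ dist x' y < dist x y := by
  set Z : Set (EuclideanSpace ℝ (Fin d)) := {z | z ∈ X ∧ dist z y < dist x y} with hZ
  have hZf : Z.Finite := by
    obtain ⟨n, hn⟩ := delone_card_bound hX (dist x y)
    exact (hn y).1.subset fun z hz => ⟨hz.1, hz.2.le⟩
  have hZn : Z.Nonempty := ⟨y, hy, by simpa using hxy⟩
  obtain ⟨x', hx', hmin⟩ := hZf.exists_minimalFor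
    (fun z => dist x z ^ 2 / (dist x z ^ 2 + (dist x y ^ 2 - dist z y ^ 2))) Z hZn
  have hb : ∀ z ∈ Z, 0 < dist x y ^ 2 - dist z y ^ 2 := by
    intro z hz
    have h1 : dist z y < dist x y := hz.2
    have h0 : 0 ≤ dist z y := dist_nonneg
    nlinarith
  set t := dist x x' ^ 2 / (dist x x' ^ 2 + (dist x y ^ 2 - dist x' y ^ 2)) with ht
  have hb' := hb x' hx'
  have ht0 : 0 ≤ t := by positivity
  have ht1 : t ≤ 1 := by
    rw [ht, div_le_one (by positivity)]; linarith
  have key : ∀ z, dist (x + t • (y - x)) z ^ 2 - dist (x + t • (y - x)) x ^ 2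
      = (1 - t) * dist x z ^ 2 - t * (dist x y ^ 2 - dist z y ^ 2) := by
    intro z
    have e1 : x + t • (y - x) - z = (x - z) + t • (y - x) := by abel
    have e2 : x + t • (y - x) - x = t • (y - x) := by abel
    have e3 : dist x y = ‖y - x‖ := by rw [dist_comm, dist_eq_norm]
    have e4 : dist z y = ‖(x - z) + (y - x)‖ := by
      rw [dist_comm, dist_eq_norm]; congr 1; abel
    rw [e3, e4, dist_eq_norm, dist_eq_norm, dist_eq_norm x z, e1, e2, norm_add_sq_real,
      norm_add_sq_real, inner_smul_right]
    ring
  have hle : ∀ z ∈ X, dist (x + t • (y - x)) x ≤ dist (x + t • (y - x)) z := by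
    intro z hz
    refine (sq_le_sq₀ dist_nonneg dist_nonneg).1 ?_
    have k := key z
    by_cases hzZ : z ∈ Z
    · have hbz := hb z hzZ
      have hmt : t ≤ dist x z ^ 2 / (dist x z ^ 2 + (dist x y ^ 2 - dist z y ^ 2)) := by
        rcases le_total t (dist x z ^ 2 / (dist x z ^ 2 + (dist x y ^ 2 - dist z y ^ 2))) with h | h
        · exact h
        · exact hmin hzZ h
      rw [le_div_iff₀ (by positivity)] at hmt
      nlinarith
    · have : dist x y ≤ dist z y := by
        by_contra hcon
        exact hzZ ⟨hz, not_le.1 hcon⟩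
      have h2 : dist x y ^ 2 ≤ dist z y ^ 2 := by gcongr
      have h3 : 0 ≤ (1 - t) * dist x z ^ 2 := mul_nonneg (by linarith) (by positivity)
      have h4 : 0 ≤ t * (dist z y ^ 2 - dist x y ^ 2) := mul_nonneg ht0 (by linarith)
      nlinarith
  refine ⟨x', hx'.1, ⟨x + t • (y - x), fun z hz => ⟨hle z hz, le_trans ?_ (hle z hz)⟩⟩, hx'.2⟩
  refine (sq_le_sq₀ dist_nonneg dist_nonneg).1 ?_
  have k := key x'
  have : t * (dist x x' ^ 2 + (dist x y ^ 2 - dist x' y ^ 2)) = dist x x' ^ 2 := by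
    rw [ht]; field_simp
  nlinarith

lemma adj_rigid {d : ℕ} {X : Set (EuclideanSpace ℝ (Fin d))} {r R : ℝ}
    (hX : IsDeloneSet X r R) {x x' : EuclideanSpace ℝ (Fin d)} (hx : x ∈ X) (hx' : x' ∈ X)
    (hadj : VAdj X x x') (p q : EuclideanSpace ℝ (Fin d))
    (hpq : ∀ s ∈ cluster X x (2 * R) ∩ cluster X x' (2 * R), dist s p = dist s q) : p = q := by
  by_contra hne
  set F : Set (EuclideanSpace ℝ (Fin d)) :=
    {c | ∀ z ∈ X, dist c x ≤ dist c z ∧ dist c x' ≤ dist c z} with hF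
  have hFR : ∀ c ∈ F, dist c x ≤ R := by
    intro c hc
    obtain ⟨z, hz, hzc⟩ := hX.2.2.2 c
    rw [mem_closedBall, dist_comm] at hzc
    exact (hc z hz).1.trans hzc
  have hFc : IsClosed F := by
    have : F = ⋂ z ∈ X, ({c | dist c x ≤ dist c z} ∩ {c | dist c x' ≤ dist c z}) := by
      ext c; simp [hF]
    rw [this]
    refine isClosed_biInter fun z _ => IsClosed.inter ?_ ?_ <;>
      exact isClosed_le (by fun_prop) (by fun_prop)
  have hFk : IsCompact F := (isCompact_closedBall x R).of_isClosed_subset hFc hFR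
  obtain ⟨v, hv, hmax⟩ := hFk.exists_isMaxOn hadj (f := fun c => dist c x)
    (by fun_prop)
  set u := q - p with hu
  have hu0 : u ≠ 0 := sub_ne_zero.2 (Ne.symm hne)
  have hxx' : dist v x = dist v x' := le_antisymm (hv x' hx').1 (hv x hx).2
  have hvR := hFR v hv
  have hin : ∀ s ∈ X, dist v s = dist v x → inner ℝ s u = inner ℝ x u := by
    have aux : ∀ s ∈ X, dist v s = dist v x → 2 * inner ℝ s u = ‖q‖ ^ 2 - ‖p‖ ^ 2 := by
      intro s hs hsv
      have h1 : dist s x ≤ 2 * R := by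
        have := dist_triangle_left s x v
        linarith
      have h2 : dist s x' ≤ 2 * R := by
        have := dist_triangle_left s x' v
        linarith
      have := hpq s ⟨⟨hs, h1⟩, ⟨hs, h2⟩⟩
      rw [dist_eq_norm, dist_eq_norm] at this
      have h3 : ‖s - p‖ ^ 2 = ‖s - q‖ ^ 2 := by rw [this]
      rw [norm_sub_sq_real, norm_sub_sq_real] at h3
      rw [hu, inner_sub_right]
      linarith
    intro s hs hsv
    have a := aux s hs hsv
    have b := aux x hx rfl
    linarith
  have hmove : ∀ ε : ℝ, ∀ s ∈ X, dist v s = dist v x → dist (v + ε • u) s = dist (v + ε • u) x := by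
    intro ε s hs hsv
    have h1 := hin s hs hsv
    refine (sq_eq_sq₀ dist_nonneg dist_nonneg).1 ?_
    have e : ∀ w, dist (v + ε • u) w ^ 2 = dist v w ^ 2 + 2 * ε * (inner ℝ v u - inner ℝ w u)
        + ‖ε • u‖ ^ 2 := by
      intro w
      have : v + ε • u - w = (v - w) + ε • u := by abel
      rw [dist_eq_norm, dist_eq_norm, this, norm_add_sq_real, inner_smul_right, inner_sub_left]
      ring
    rw [e, e, hsv, h1]
  have hev : ∀ᶠ ε in nhds (0 : ℝ), v + ε • u ∈ F := by
    obtain ⟨n, hn⟩ := delone_card_bound hX (R + 2)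
    have hfin := (hn v).1
    have h1 : ∀ᶠ ε in nhds (0 : ℝ), ∀ z ∈ X ∩ closedBall v (R + 2),
        dist (v + ε • u) x ≤ dist (v + ε • u) z := by
      rw [Filter.eventually_all_finite hfin]
      intro z hz
      rcases (hv z hz.1).1.eq_or_lt with h | h
      · exact Filter.Eventually.of_forall fun ε => (hmove ε z hz.1 h.symm).ge
      · have c1 : ContinuousAt (fun ε : ℝ => dist (v + ε • u) x) 0 := by fun_prop
        have c2 : ContinuousAt (fun ε : ℝ => dist (v + ε • u) z) 0 := by fun_prop
        have := c1.eventually_lt c2 (by simpa using h)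
        exact this.mono fun _ => le_of_lt
    have h2 : ∀ᶠ ε in nhds (0 : ℝ), dist (v + ε • u) v < 1 := by
      have c1 : ContinuousAt (fun ε : ℝ => dist (v + ε • u) v) 0 := by fun_prop
      exact c1.eventually_lt continuousAt_const (by simp)
    filter_upwards [h1, h2] with ε he1 he2
    have main : ∀ z ∈ X, dist (v + ε • u) x ≤ dist (v + ε • u) z := by
      intro z hz
      by_cases hzb : z ∈ closedBall v (R + 2)
      · exact he1 z ⟨hz, hzb⟩
      · rw [mem_closedBall, not_le] at hzb
        have t1 := dist_triangle (v + ε • u) v x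
        have t2 := dist_triangle_left z v (v + ε • u)
        linarith
    intro z hz
    exact ⟨main z hz, (hmove ε x' hx' hxx'.symm).le.trans (main z hz)⟩
  obtain ⟨δ, hδ, hδ2⟩ := Metric.eventually_nhds_iff.1 hev
  have ha : v + (δ / 2) • u ∈ F := hδ2 (by
    rw [Real.dist_eq, sub_zero, abs_of_pos (by positivity)]; linarith)
  have hb : v + (-(δ / 2)) • u ∈ F := hδ2 (by
    rw [Real.dist_eq, sub_zero, abs_neg, abs_of_pos (by positivity)]; linarith)
  have ha' : dist (v + (δ / 2) • u) x ≤ dist v x := hmax ha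
  have hb' : dist (v + (-(δ / 2)) • u) x ≤ dist v x := hmax hb
  have ea : v + (δ / 2) • u - x = (v - x) + (δ / 2) • u := by abel
  have eb : v + (-(δ / 2)) • u - x = (v - x) - (δ / 2) • u := by rw [neg_smul]; abel
  rw [dist_eq_norm, dist_eq_norm, ea] at ha'
  rw [dist_eq_norm, dist_eq_norm, eb] at hb'
  have pl := parallelogram_law_with_norm ℝ (v - x) ((δ / 2) • u)
  have hpos : 0 < ‖(δ / 2) • u‖ := by
    rw [norm_pos_iff]; exact smul_ne_zero (by positivity) hu0
  have n1 := norm_nonneg (v - x + (δ / 2) • u)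
  have n2 := norm_nonneg (v - x - (δ / 2) • u)
  nlinarith [mul_self_le_mul_self n1 ha', mul_self_le_mul_self n2 hb']

lemma clusterEquiv_equivalence {d : ℕ} (X : Set (EuclideanSpace ℝ (Fin d))) (ρ : ℝ) :
    Equivalence (fun a b : X => ClusterEquiv X ρ (a : EuclideanSpace ℝ (Fin d)) b) := by
  refine ⟨fun a => ⟨IsometryEquiv.refl _, rfl, by
    change (fun z => z) '' _ = _
    exact Set.image_id' _⟩, ?_, ?_⟩
  · rintro a b ⟨g, h1, h2⟩
    refine ⟨g.symm, by rw [← h1]; simp, ?_⟩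
    rw [← h2, ← Set.image_comp]
    have : ⇑g.symm ∘ ⇑g = id := by funext z; simp
    rw [this, Set.image_id]
  · rintro a b c ⟨g, h1, h2⟩ ⟨g', h3, h4⟩
    refine ⟨g.trans g', by simp [h1, h3], ?_⟩
    rw [← h4, ← h2, ← Set.image_comp]; rfl

lemma finite_trans {d : ℕ} (M : Set (EuclideanSpace ℝ (Fin d))) (hM : M.Finite) :
    {τ : EuclideanSpace ℝ (Fin d) ≃ᵢ EuclideanSpace ℝ (Fin d) |
      ∀ p q, (∀ s, s ∈ M → τ s ∈ M → dist s p = dist s q) → p = q}.Finite := by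
  refine Set.Finite.of_injOn (t := (M ×ˢ M).powerset)
    (f := fun τ => {ab | ab ∈ M ×ˢ M ∧ τ ab.1 = ab.2}) ?_ ?_ (hM.prod hM).finite_subsets
  · intro τ _ ab hab
    exact hab.1
  · intro τ hτ σ hσ heq
    ext1 p
    have := hτ p (σ.symm (τ p)) (fun s hs hτs => by
      have h1 : (s, τ s) ∈ {ab : _ × _ | ab ∈ M ×ˢ M ∧ τ ab.1 = ab.2} := ⟨⟨hs, hτs⟩, rfl⟩
      have h2 : (s, τ s) ∈ {ab : _ × _ | ab ∈ M ×ˢ M ∧ σ ab.1 = ab.2} := by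
        have h := heq
        simp only at h
        rw [← h]; exact h1
      have h3 : σ s = τ s := h2.2
      rw [← σ.dist_eq s (σ.symm (τ p)), h3, σ.apply_symm_apply, τ.dist_eq])
    conv_rhs => rw [this]
    simp

theorem delone_finite_type {d : ℕ} (X : Set (EuclideanSpace ℝ (Fin d))) (r R : ℝ)
    (hX : IsDeloneSet X r R)
    (h : Finite (Quot fun a b : X =>
      ClusterEquiv X (2 * R) (a : EuclideanSpace ℝ (Fin d)) b)) :
    ∀ ρ > 0, Finite (Quot fun a b : X =>
      ClusterEquiv X ρ (a : EuclideanSpace ℝ (Fin d)) b) := by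
  intro ρ hρ
  set Q := Quot fun a b : X => ClusterEquiv X (2 * R) (a : EuclideanSpace ℝ (Fin d)) b with hQ
  let cl : X → Q := fun x => Quot.mk _ x
  let rep : Q → X := Quot.out
  have hrep : ∀ x : X, ClusterEquiv X (2 * R) (rep (cl x) : EuclideanSpace ℝ (Fin d)) x := by
    intro x
    exact ((clusterEquiv_equivalence X (2 * R)).eqvGen_iff).1
      (Quot.eqvGen_exact (Quot.out_eq (cl x)))
  choose g hg1 hg2 using hrep
  let M : Set (EuclideanSpace ℝ (Fin d)) := ⋃ i : Q, cluster X (rep i) (2 * R)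
  have hM : M.Finite := by
    obtain ⟨n, hn⟩ := delone_card_bound hX (2 * R)
    exact Set.finite_iUnion fun i => (hn _).1
  have hgM : ∀ x : X, ∀ s ∈ cluster X x (2 * R), (g x)⁻¹ s ∈ M := by
    intro x s hs
    rw [← hg2] at hs
    obtain ⟨w, hw, rfl⟩ := hs
    rw [IsometryEquiv.inv_apply_self]
    exact Set.mem_iUnion.2 ⟨_, hw⟩
  set T := {τ : EuclideanSpace ℝ (Fin d) ≃ᵢ EuclideanSpace ℝ (Fin d) |
      ∀ p q, (∀ s, s ∈ M → τ s ∈ M → dist s p = dist s q) → p = q} with hT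
  have hTf : T.Finite := finite_trans M hM
  have hadjT : ∀ x x' : X, VAdj X (x : EuclideanSpace ℝ (Fin d)) x' → (g x)⁻¹ * g x' ∈ T := by
    intro x x' hxx' p q hpq
    apply (g x').injective
    refine adj_rigid hX x.2 x'.2 hxx' _ _ fun s hs => ?_
    have := hpq ((g x')⁻¹ s) (hgM x' s hs.2) (by
      rw [IsometryEquiv.mul_apply, IsometryEquiv.apply_inv_self]
      exact hgM x s hs.1)
    rw [← (g x').dist_eq, ← (g x').dist_eq ((g x')⁻¹ s) q, IsometryEquiv.apply_inv_self] at this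
    exact this
  obtain ⟨n, hn⟩ := delone_card_bound hX ρ
  let S : ℕ → Set (EuclideanSpace ℝ (Fin d) ≃ᵢ EuclideanSpace ℝ (Fin d)) := fun k =>
    Nat.rec {1} (fun _ A => {1} ∪ Set.image2 (fun a b => a * b) T A) k
  have hSf : ∀ k, (S k).Finite := by
    intro k
    induction k with
    | zero => exact Set.finite_singleton _
    | succ k ih => exact (Set.finite_singleton _).union (hTf.image2 _ ih)
  have hS1 : ∀ k, 1 ∈ S k := by
    intro k
    cases k with
    | zero => exact rfl
    | succ k => exact Or.inl rfl
  have hS : ∀ k, ∀ x y : X, (X ∩ closedBall (y : EuclideanSpace ℝ (Fin d)) (dist (x : EuclideanSpace ℝ (Fin d)) y)).ncard ≤ k →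
      (g x)⁻¹ * g y ∈ S k := by
    intro k
    induction k with
    | zero =>
      intro x y hk
      obtain ⟨m, hm⟩ := delone_card_bound hX (dist (x : EuclideanSpace ℝ (Fin d)) y)
      have h0 := (Set.ncard_eq_zero (hm y).1).1 (Nat.le_zero.1 hk)
      have : (y : EuclideanSpace ℝ (Fin d)) ∈
          X ∩ closedBall (y : EuclideanSpace ℝ (Fin d)) (dist (x : EuclideanSpace ℝ (Fin d)) y) :=
        ⟨y.2, mem_closedBall_self dist_nonneg⟩
      rw [h0] at this
      exact this.elim
    | succ k ih =>
      intro x y hk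
      by_cases hxy : x = y
      · subst hxy
        rw [inv_mul_cancel]; exact hS1 (k + 1)
      · obtain ⟨x', hx', hadj, hlt⟩ := greedy_step hX x.2 y.2 (fun h => hxy (Subtype.ext h))
        obtain ⟨m, hm⟩ := delone_card_bound hX (dist (x : EuclideanSpace ℝ (Fin d)) y)
        have hlt2 : (X ∩ closedBall (y : EuclideanSpace ℝ (Fin d)) (dist x' (y : EuclideanSpace ℝ (Fin d)))).ncard <
            (X ∩ closedBall (y : EuclideanSpace ℝ (Fin d)) (dist (x : EuclideanSpace ℝ (Fin d)) y)).ncard := by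
          refine Set.ncard_lt_ncard ⟨fun z hz => ⟨hz.1, closedBall_subset_closedBall hlt.le hz.2⟩, ?_⟩ (hm y).1
          intro hsub
          have : (x : EuclideanSpace ℝ (Fin d)) ∈ _ := hsub ⟨x.2, mem_closedBall.2 le_rfl⟩
          have := mem_closedBall.1 this.2
          linarith
        have hrec := ih ⟨x', hx'⟩ y (by show Set.ncard _ ≤ k; simp only; omega)
        refine Or.inr ⟨_, hadjT x ⟨x', hx'⟩ hadj, _, hrec, ?_⟩
        simp only
        group
  let W : Set (EuclideanSpace ℝ (Fin d)) :=
    Set.image2 (fun τ (i : Q) => τ (rep i : EuclideanSpace ℝ (Fin d))) (S n) Set.univ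
  have hW : W.Finite := (hSf n).image2 _ Set.finite_univ
  have hPW : ∀ x : X, (g x).symm '' cluster X x ρ ⊆ W := by
    rintro x _ ⟨y, hy, rfl⟩
    refine ⟨(g x)⁻¹ * g ⟨y, hy.1⟩, hS n x ⟨y, hy.1⟩ ?_, cl ⟨y, hy.1⟩, trivial, ?_⟩
    · refine le_trans (Set.ncard_le_ncard ?_ (hn y).1) (hn y).2
      refine fun z hz => ⟨hz.1, closedBall_subset_closedBall ?_ hz.2⟩
      have := hy.2
      rw [mem_closedBall, dist_comm] at this
      exact this
    · simp only [IsometryEquiv.mul_apply, hg1]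
      rfl
  have hfinP : Finite (W.powerset) := hW.finite_subsets
  let f : X → Q × W.powerset := fun x => (cl x, ⟨(g x).symm '' cluster X x ρ, hPW x⟩)
  have hf : ∀ a b : X, f a = f b → ClusterEquiv X ρ (a : EuclideanSpace ℝ (Fin d)) b := by
    intro a b hab
    have h1 : cl a = cl b := congrArg Prod.fst hab
    have h2 : (g a).symm '' cluster X a ρ = (g b).symm '' cluster X b ρ :=
      congrArg (fun p => (p.2 : Set (EuclideanSpace ℝ (Fin d)))) hab
    refine ⟨g b * (g a)⁻¹, ?_, ?_⟩
    · have : (g a)⁻¹ (a : EuclideanSpace ℝ (Fin d)) = rep (cl b) := by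
        rw [← h1]
        conv_lhs => rw [← hg1 a]
        rw [IsometryEquiv.inv_apply_self]
      rw [IsometryEquiv.mul_apply, this, hg1]
    · have : (⇑(g b * (g a)⁻¹) : _ → _) = ⇑(g b) ∘ ⇑(g a).symm := rfl
      rw [this, Set.image_comp, h2, ← Set.image_comp]
      have : ⇑(g b) ∘ ⇑(g b).symm = id := by
        funext z; simp
      rw [this, Set.image_id]
  refine Finite.of_injective (fun c : Quot (fun a b : X =>
      ClusterEquiv X ρ (a : EuclideanSpace ℝ (Fin d)) b) => f c.out) ?_
  intro a b hab
  rw [← Quot.out_eq a, ← Quot.out_eq b]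
  exact Quot.sound (hf _ _ hab)
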